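/- Let α ∈ ℂ with α ≠ 0 and let R ∈ ℂ(z)^{m×m}. Then R is para-Hermitian if and only if there exist a natural number p and constant matrices A ∈ ℂ^{p×p}, B, C ∈ ℂ^{p×m}, D ∈ ℂ^{m×m} such that det(z·A + A^H) ≠ 0 in ℂ(z) and (α + conj(α)·z)·R = (z·D + D^H) + (z·B^H + C^H)·(z·A + A^H)⁻¹·(z·C + B). -/

import Mathlib

open Polynomial Matrix

set_option synthInstance.maxHeartbeats 1000000
set_option maxHeartbeats 1000000

noncomputable section

/-- Coefficientwise complex conjugation on rational functions. -/
def conjRF : RatFunc ℂ →+* RatFunc ℂ :=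
  RatFunc.mapRingHom (Polynomial.mapRingHom (starRingEnd ℂ))
    (by
      intro x hx
      simp only [Submonoid.mem_comap, mem_nonZeroDivisors_iff_ne_zero] at *
      intro h
      exact hx (Polynomial.map_injective _ (starRingEnd ℂ).injective (by simpa using h)))

/-- Substitution of `g` for the variable in `f`. -/
def subst (g f : RatFunc ℂ) : RatFunc ℂ := RatFunc.eval (algebraMap ℂ (RatFunc ℂ)) g f

/-- Constant complex matrices regarded as matrices over `ℂ(z)`. -/
def toRF {n o : Type*} (A : Matrix n o ℂ) : Matrix n o (RatFunc ℂ) :=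
  A.map (algebraMap ℂ (RatFunc ℂ))

/-- The para-conjugate `R^*(1/z)`. -/
def paraConj {n : Type*} (R : Matrix n n (RatFunc ℂ)) : Matrix n n (RatFunc ℂ) :=
  fun i j => subst (RatFunc.X)⁻¹ (conjRF (R j i))

def IsParaHermitian {n : Type*} (R : Matrix n n (RatFunc ℂ)) : Prop := paraConj R = R

def IsParaSkewHermitian {n : Type*} (R : Matrix n n (RatFunc ℂ)) : Prop := paraConj R = -R

/-- The variable `z` of `ℂ(z)`. -/
def zz : RatFunc ℂ := RatFunc.X

/-- Coefficientwise-conjugate transpose of a matrix over `ℂ(z)`. -/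
def conjT {a b : Type*} (R : Matrix a b (RatFunc ℂ)) : Matrix b a (RatFunc ℂ) :=
  fun i j => conjRF (R j i)

/-- Entrywise substitution of `g` into a matrix over `ℂ(z)`. -/
def substMat {a b : Type*} (g : RatFunc ℂ) (R : Matrix a b (RatFunc ℂ)) :
    Matrix a b (RatFunc ℂ) :=
  fun i j => subst g (R i j)

/-!
Para-conjugation `f ↦ conj f (1/z)` is an involution of the field `ℂ(z)` for which `z` is unitary,
and a matrix is para-Hermitian exactly when it is Hermitian for this involution. Since
`(z A + B)ᴴ = z⁻¹ (z Bᴴ + Aᴴ)`, the right-hand side `S` of the parametrization satisfies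
`Sᴴ = z⁻¹ S`; so does the weight `α + conj α z`, and dividing by it shows that `R` is Hermitian.

Conversely, if `R` is Hermitian then `(α + conj α z) R = T + z Tᴴ` with `T = α R`. The elements of
`ℂ(z)` of the form `u (z Y + X)⁻¹ v` with constant `u`, `v`, `X`, `Y` form a field containing `z`,
so `T = P (z Y + X)⁻¹ Q` with constant matrices. The block-antidiagonal pencil with blocks
`M = z Y + X` and `z Mᴴ = z Xᴴ + Yᴴ` has the form `z A + Aᴴ`, and its inverse yields `T + z Tᴴ`.
-/

section Pencil

variable {K L m n ι κ : Type*} [CommSemiring K] [CommSemiring L] [Algebra K L]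

/-- The matrix pencil `z A + B` over `L` with constant coefficient matrices `A`, `B` over `K`. -/
def pencil (z : L) (A B : Matrix m n K) : Matrix m n L :=
  z • A.map (algebraMap K L) + B.map (algebraMap K L)

@[simp]
lemma pencil_zero_left (z : L) (B : Matrix m n K) :
    pencil z 0 B = B.map (algebraMap K L) := by
  simp [pencil]

@[simp]
lemma pencil_zero_right (z : L) (A : Matrix m n K) :
    pencil z A 0 = z • A.map (algebraMap K L) := by
  simp [pencil]

lemma pencil_fromBlocks (z : L) (A₁₁ B₁₁ : Matrix m ι K) (A₁₂ B₁₂ : Matrix m κ K)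
    (A₂₁ B₂₁ : Matrix n ι K) (A₂₂ B₂₂ : Matrix n κ K) :
    pencil z (fromBlocks A₁₁ A₁₂ A₂₁ A₂₂) (fromBlocks B₁₁ B₁₂ B₂₁ B₂₂) =
      fromBlocks (pencil z A₁₁ B₁₁) (pencil z A₁₂ B₁₂) (pencil z A₂₁ B₂₁) (pencil z A₂₂ B₂₂) := by
  simp only [pencil, fromBlocks_map, fromBlocks_smul, fromBlocks_add]

lemma pencil_fromRows (z : L) (A₁ B₁ : Matrix m ι K) (A₂ B₂ : Matrix n ι K) :
    pencil z (fromRows A₁ A₂) (fromRows B₁ B₂) =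
      fromRows (pencil z A₁ B₁) (pencil z A₂ B₂) := by
  ext (i | i) j <;> rfl

lemma pencil_fromCols (z : L) (A₁ B₁ : Matrix m ι K) (A₂ B₂ : Matrix m κ K) :
    pencil z (fromCols A₁ A₂) (fromCols B₁ B₂) =
      fromCols (pencil z A₁ B₁) (pencil z A₂ B₂) := by
  ext i (j | j) <;> rfl

variable [StarRing K] [StarRing L] [StarModule K L] {z : L}

lemma conjTranspose_map_algebraMap (A : Matrix m n K) :
    (A.map (algebraMap K L))ᴴ = Aᴴ.map (algebraMap K L) := by
  ext i j
  simp [algebraMap_star_comm]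

lemma conjTranspose_pencil (hz : z ∈ unitary L) (A B : Matrix m n K) :
    (pencil z A B)ᴴ = star z • pencil z Bᴴ Aᴴ := by
  rw [pencil, pencil, conjTranspose_add, conjTranspose_smul, conjTranspose_map_algebraMap,
    conjTranspose_map_algebraMap, smul_add, smul_smul, Unitary.star_mul_self_of_mem hz, one_smul,
    add_comm]

end Pencil

lemma submatrix_mul_inv_mul_submatrix {L m n ι κ : Type*} [CommRing L] [Fintype ι]
    [DecidableEq ι] [Fintype κ] [DecidableEq κ] (e : κ ≃ ι) (P : Matrix m ι L) (M : Matrix ι ι L)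
    (Q : Matrix ι n L) :
    P.submatrix id e * (M.submatrix e e)⁻¹ * Q.submatrix e id = P * M⁻¹ * Q := by
  rw [inv_submatrix_equiv, submatrix_mul_equiv, submatrix_mul_equiv, submatrix_id_id]

section LinearRepresentation

variable {K L m n : Type*} [CommRing K] [CommRing L] [Algebra K L] {z : L}

variable (K) in
/-- A linear representation `R = P (z Y + X)⁻¹ Q` of a matrix `R` over `L`, with `P`, `Q`, `X`, `Y`
constant matrices over `K`. -/
def HasLinearRepresentation (z : L) (R : Matrix m n L) : Prop :=
  ∃ (d : ℕ) (Y X : Matrix (Fin d) (Fin d) K) (P : Matrix m (Fin d) K) (Q : Matrix (Fin d) n K),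
    IsUnit (pencil z Y X).det ∧
      R = P.map (algebraMap K L) * (pencil z Y X)⁻¹ * Q.map (algebraMap K L)

namespace HasLinearRepresentation

lemma of_leftInverse {ι : Type*} [Fintype ι] [DecidableEq ι] {R : Matrix m n L}
    {Y X : Matrix ι ι K} {P : Matrix m ι K} {Q : Matrix ι n K} {N : Matrix ι ι L}
    (hN : N * pencil z Y X = 1)
    (hR : R = P.map (algebraMap K L) * N * Q.map (algebraMap K L)) :
    HasLinearRepresentation K z R := by
  let e := (Fintype.equivFin ι).symm
  have hpencil : pencil z (Y.submatrix e e) (X.submatrix e e) = (pencil z Y X).submatrix e e := rfl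
  refine ⟨_, Y.submatrix e e, X.submatrix e e, P.submatrix id e, Q.submatrix e id, ?_, ?_⟩
  · rw [hpencil, det_submatrix_equiv_self]
    exact isUnit_det_of_left_inverse hN
  · rw [hR, ← inv_eq_left_inv hN, hpencil, ← submatrix_map, ← submatrix_map,
      submatrix_mul_inv_mul_submatrix]

lemma exists_leftInverse {R : Matrix m n L} (hR : HasLinearRepresentation K z R) :
    ∃ (d : ℕ) (Y X : Matrix (Fin d) (Fin d) K) (P : Matrix m (Fin d) K) (Q : Matrix (Fin d) n K)
      (N : Matrix (Fin d) (Fin d) L), N * pencil z Y X = 1 ∧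
        R = P.map (algebraMap K L) * N * Q.map (algebraMap K L) :=
  let ⟨d, Y, X, P, Q, hdet, hR⟩ := hR
  ⟨d, Y, X, P, Q, _, nonsing_inv_mul _ hdet, hR⟩

lemma map_algebraMap [Finite n] (A : Matrix m n K) :
    HasLinearRepresentation K z (A.map (algebraMap K L)) := by
  classical
  cases nonempty_fintype n
  exact of_leftInverse (Y := 0) (X := 1) (P := A) (Q := 1) (N := 1) (by simp) (by simp)

lemma add {R S : Matrix m n L} (hR : HasLinearRepresentation K z R)
    (hS : HasLinearRepresentation K z S) : HasLinearRepresentation K z (R + S) := by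
  obtain ⟨_, Y, X, P, Q, N, hN, rfl⟩ := hR.exists_leftInverse
  obtain ⟨_, Y', X', P', Q', N', hN', rfl⟩ := hS.exists_leftInverse
  refine of_leftInverse (Y := fromBlocks Y 0 0 Y') (X := fromBlocks X 0 0 X')
    (P := fromCols P P') (Q := fromRows Q Q') (N := fromBlocks N 0 0 N') ?_ ?_
  · simp [pencil_fromBlocks, fromBlocks_multiply, hN, hN']
  · simp [fromCols_map, fromRows_map, fromCols_mul_fromBlocks, fromCols_mul_fromRows]

lemma mul {l : Type*} [Fintype n] {R : Matrix m n L} {S : Matrix n l L}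
    (hR : HasLinearRepresentation K z R) (hS : HasLinearRepresentation K z S) :
    HasLinearRepresentation K z (R * S) := by
  obtain ⟨_, Y, X, P, Q, N, hN, rfl⟩ := hR.exists_leftInverse
  obtain ⟨_, Y', X', P', Q', N', hN', rfl⟩ := hS.exists_leftInverse
  refine of_leftInverse (Y := fromBlocks Y 0 0 Y') (X := fromBlocks X (-(Q * P')) 0 X')
    (P := fromCols P 0) (Q := fromRows 0 Q')
    (N := fromBlocks N (N * (Q * P').map (algebraMap K L) * N') 0 N') ?_ ?_
  · simp [pencil_fromBlocks, fromBlocks_multiply, hN, hN', Matrix.mul_assoc, Matrix.map_neg]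
  · simp [fromCols_map, fromRows_map, fromCols_mul_fromBlocks, fromCols_mul_fromRows,
      Matrix.map_mul, Matrix.mul_assoc]

lemma of_mul_eq_one {κ : Type*} [Fintype κ] [DecidableEq κ] {R S : Matrix κ κ L}
    (hR : HasLinearRepresentation K z R) (hSR : S * R = 1) : HasLinearRepresentation K z S := by
  obtain ⟨_, Y, X, P, Q, N, hN, rfl⟩ := hR.exists_leftInverse
  -- The Schur complement of the zero block of the enlarged pencil is `R`, so its inverse is
  -- expressed through `S`.
  rw [Matrix.mul_assoc] at hSR
  refine of_leftInverse (Y := fromBlocks Y 0 0 0) (X := fromBlocks X Q (-P) 0)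
    (P := fromCols 0 1) (Q := fromRows 0 1)
    (N := fromBlocks
      (N - N * Q.map (algebraMap K L) * S * P.map (algebraMap K L) * N)
      (-(N * Q.map (algebraMap K L) * S))
      (S * P.map (algebraMap K L) * N)
      S) ?_ ?_
  · simp [pencil_fromBlocks, fromBlocks_multiply, Matrix.map_neg, Matrix.sub_mul,
      Matrix.mul_assoc, hN, hSR]
  · simp [fromCols_map, fromRows_map, fromCols_mul_fromBlocks, fromCols_mul_fromRows]

end HasLinearRepresentation

end LinearRepresentation

section Adjoin

variable {K L m n : Type*} [Field K] [Field L] [Algebra K L] {z : L}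

lemma hasLinearRepresentation_scalar_inv (z : L) :
    HasLinearRepresentation K z (scalar Unit z⁻¹) := by
  obtain rfl | hz := eq_or_ne z 0
  · simpa using HasLinearRepresentation.map_algebraMap (z := (0 : L)) (0 : Matrix Unit Unit K)
  · refine .of_leftInverse (ι := Unit) (Y := 1) (X := 0) (P := 1) (Q := 1) (N := z⁻¹ • 1) ?_ ?_
    · simp [pencil, hz]
    · simp [smul_one_eq_diagonal]

variable (K) in
/-- The elements of `L` that have, as `1 × 1` matrices, a linear representation over `K`. -/
def linearlyRepresentable (z : L) : IntermediateField K L where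
  carrier := {f | HasLinearRepresentation K z (scalar Unit f)}
  mul_mem' hf hg := by simpa only [Set.mem_ofPred_eq, map_mul] using hf.mul hg
  add_mem' hf hg := by simpa only [Set.mem_ofPred_eq, map_add] using hf.add hg
  algebraMap_mem' c := by
    simpa using HasLinearRepresentation.map_algebraMap (z := z) (scalar Unit c)
  inv_mem' f hf := by
    obtain rfl | hf₀ := eq_or_ne f 0
    · simpa using hf
    · exact hf.of_mul_eq_one (by rw [← map_mul, inv_mul_cancel₀ hf₀, map_one])

lemma adjoin_le_linearlyRepresentable (z : L) :
    IntermediateField.adjoin K {z} ≤ linearlyRepresentable K z := by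
  rw [IntermediateField.adjoin_simple_le_iff, ← inv_mem_iff]
  exact hasLinearRepresentation_scalar_inv z

lemma hasLinearRepresentation_of_mem_adjoin [Finite m] [Finite n] {R : Matrix m n L}
    (hR : ∀ i j, R i j ∈ IntermediateField.adjoin K {z}) : HasLinearRepresentation K z R := by
  classical
  cases nonempty_fintype m
  cases nonempty_fintype n
  have hzero : HasLinearRepresentation K z (0 : Matrix m n L) := by
    simpa using HasLinearRepresentation.map_algebraMap (z := z) (0 : Matrix m n K)
  rw [matrix_eq_sum_single R]
  refine Finset.sum_induction _ _ (fun _ _ => .add) hzero fun i _ =>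
    Finset.sum_induction _ _ (fun _ _ => .add) hzero fun j _ => ?_
  have hsingle : single i j (R i j) =
      (single i () (1 : K)).map (algebraMap K L) * scalar Unit (R i j) *
        (single () j (1 : K)).map (algebraMap K L) := by
    simp [map_single]
  rw [hsingle]
  exact ((HasLinearRepresentation.map_algebraMap _).mul
    (adjoin_le_linearlyRepresentable z (hR i j))).mul (.map_algebraMap _)

end Adjoin

lemma isHermitian_iff_conjTranspose_smul {L n : Type*} [Field L] [StarRing L] {c w : L}
    (hw : w ≠ 0) (hcw : star w = c * w) {R : Matrix n n L} :
    R.IsHermitian ↔ (w • R)ᴴ = c • w • R := by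
  rw [conjTranspose_smul, smul_smul, ← hcw,
    (smul_right_injective _ (star_ne_zero.mpr hw)).eq_iff, IsHermitian]

section HermitianRealization

variable {K L n ι : Type*} [CommRing K] [CommRing L] [Algebra K L] [Fintype ι] [DecidableEq ι]
  {z : L}

/-- The matrix `z D + Dᴴ + (z Bᴴ + Cᴴ) (z A + Aᴴ)⁻¹ (z C + B)` over `L` built from constant
matrices over `K`. -/
def hermitianRealization [Star K] (z : L) (A : Matrix ι ι K) (B C : Matrix ι n K)
    (D : Matrix n n K) : Matrix n n L :=
  pencil z D Dᴴ + pencil z Bᴴ Cᴴ * (pencil z A Aᴴ)⁻¹ * pencil z C B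

lemma hermitianRealization_submatrix [Star K] {κ : Type*} [Fintype κ] [DecidableEq κ] (e : κ ≃ ι)
    (A : Matrix ι ι K) (B C : Matrix ι n K) (D : Matrix n n K) :
    hermitianRealization z (A.submatrix e e) (B.submatrix e id) (C.submatrix e id) D =
      hermitianRealization z A B C D := by
  rw [hermitianRealization, hermitianRealization, ← submatrix_mul_inv_mul_submatrix e]
  rfl

variable [StarRing K] [StarRing L] [StarModule K L]

lemma conjTranspose_hermitianRealization (hz : z ∈ unitary L) {A : Matrix ι ι K}
    (hA : IsUnit (pencil z A Aᴴ).det) (B C : Matrix ι n K) (D : Matrix n n K) :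
    (hermitianRealization z A B C D)ᴴ = star z • hermitianRealization z A B C D := by
  have hinv : (star z • pencil z A Aᴴ)⁻¹ = z • (pencil z A Aᴴ)⁻¹ := by
    refine inv_eq_left_inv ?_
    rw [smul_mul_smul_comm, Unitary.mul_star_self_of_mem hz, nonsing_inv_mul _ hA, one_smul]
  simp only [hermitianRealization, conjTranspose_add, conjTranspose_mul, conjTranspose_nonsing_inv,
    conjTranspose_pencil hz, conjTranspose_conjTranspose, hinv, smul_add, Matrix.smul_mul,
    Matrix.mul_smul, Matrix.mul_assoc, smul_smul, Unitary.mul_star_self_of_mem hz, mul_one]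

lemma antidiagonal_inv_mul_pencil (hz : z ∈ unitary L) {Y X : Matrix ι ι K}
    (hYX : IsUnit (pencil z Y X).det) :
    fromBlocks 0 (pencil z Y X)⁻¹ (star z • ((pencil z Y X)⁻¹)ᴴ) 0 *
      pencil z (fromBlocks 0 Xᴴ Y 0) (fromBlocks 0 Xᴴ Y 0)ᴴ = 1 := by
  have hinv : star z • ((pencil z Y X)⁻¹)ᴴ * pencil z Xᴴ Yᴴ = 1 := by
    rw [Matrix.smul_mul, ← Matrix.mul_smul, ← conjTranspose_pencil hz, ← conjTranspose_mul,
      mul_nonsing_inv _ hYX, conjTranspose_one]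
  simp [fromBlocks_conjTranspose, pencil_fromBlocks, fromBlocks_multiply, hinv,
    nonsing_inv_mul _ hYX]

lemma hermitianRealization_antidiagonal (hz : z ∈ unitary L) {Y X : Matrix ι ι K}
    (hYX : IsUnit (pencil z Y X).det) (P : Matrix n ι K) (Q : Matrix ι n K) {R : Matrix n n L}
    (hR : R = P.map (algebraMap K L) * (pencil z Y X)⁻¹ * Q.map (algebraMap K L)) :
    hermitianRealization z (fromBlocks 0 Xᴴ Y 0) (fromRows 0 Q) (fromRows Pᴴ 0) 0 =
      R + z • Rᴴ := by
  rw [hermitianRealization, inv_eq_left_inv (antidiagonal_inv_mul_pencil hz hYX), hR]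
  simp [conjTranspose_fromRows_eq_fromCols_conjTranspose, pencil_fromRows, pencil_fromCols,
    fromCols_mul_fromBlocks, fromCols_mul_fromRows, conjTranspose_map_algebraMap,
    smul_smul, Unitary.star_mul_self_of_mem hz, Matrix.mul_assoc, add_comm]

lemma HasLinearRepresentation.exists_hermitianRealization (hz : z ∈ unitary L) {R : Matrix n n L}
    (hR : HasLinearRepresentation K z R) :
    ∃ (p : ℕ) (A : Matrix (Fin p) (Fin p) K) (B C : Matrix (Fin p) n K),
      IsUnit (pencil z A Aᴴ).det ∧ R + z • Rᴴ = hermitianRealization z A B C 0 := by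
  obtain ⟨d, Y, X, P, Q, hYX, hR⟩ := hR
  let e := (finSumFinEquiv (m := d) (n := d)).symm
  let A := fromBlocks 0 Xᴴ Y 0
  have hA : IsUnit (pencil z A Aᴴ).det :=
    isUnit_det_of_left_inverse (antidiagonal_inv_mul_pencil hz hYX)
  refine ⟨d + d, A.submatrix e e, (fromRows 0 Q).submatrix e id, (fromRows Pᴴ 0).submatrix e id,
    ?_, ?_⟩
  · rwa [← det_submatrix_equiv_self e] at hA
  · rw [hermitianRealization_submatrix, hermitianRealization_antidiagonal hz hYX P Q hR]

end HermitianRealization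

theorem paraHermitian_parametrization_general {K L n : Type*} [Field K] [StarRing K] [Field L]
    [StarRing L] [Algebra K L] [StarModule K L] [Finite n] {z : L} (hz : z ∈ unitary L)
    (hzL : IntermediateField.adjoin K {z} = ⊤) {α : K}
    (hw : algebraMap K L α + algebraMap K L (star α) * z ≠ 0) (R : Matrix n n L) :
    R.IsHermitian ↔
      ∃ (p : ℕ) (A : Matrix (Fin p) (Fin p) K) (B C : Matrix (Fin p) n K) (D : Matrix n n K),
        (pencil z A Aᴴ).det ≠ 0 ∧
        (algebraMap K L α + algebraMap K L (star α) * z) • R = hermitianRealization z A B C D := by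
  set w := algebraMap K L α + algebraMap K L (star α) * z
  constructor
  · intro hR
    have hsum : w • R = algebraMap K L α • R + z • (algebraMap K L α • R)ᴴ := by
      rw [conjTranspose_smul, hR.eq, ← algebraMap_star_comm, smul_smul, ← add_smul, mul_comm z]
    obtain ⟨p, A, B, C, hA, h⟩ :=
      (hasLinearRepresentation_of_mem_adjoin (K := K) (z := z) (R := algebraMap K L α • R)
        (by simp [hzL])).exists_hermitianRealization hz
    exact ⟨p, A, B, C, 0, hA.ne_zero, hsum.trans h⟩
  · rintro ⟨p, A, B, C, D, hA, h⟩
    have hzw : star w = star z * w := by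
      simp only [w, star_add, star_mul', ← algebraMap_star_comm, star_star]
      linear_combination (-algebraMap K L (star α)) * Unitary.star_mul_self_of_mem hz
    rw [isHermitian_iff_conjTranspose_smul hw hzw, h]
    exact conjTranspose_hermitianRealization hz hA.isUnit B C D

lemma transcendental_X_inv {K : Type*} [Field K] :
    Transcendental K (RatFunc.X⁻¹ : RatFunc K) := fun h =>
  RatFunc.transcendental_X (IsAlgebraic.inv_iff.mp h)

/-- Para-conjugation `f ↦ conj f (1/z)` of rational functions, as a ring homomorphism. -/
def paraConjHom : RatFunc ℂ →+* RatFunc ℂ :=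
  ((IntermediateField.val _).comp
    (RatFunc.algEquivOfTranscendental _ transcendental_X_inv).toAlgHom).toRingHom.comp conjRF

lemma paraConjHom_apply (f : RatFunc ℂ) : paraConjHom f = subst RatFunc.X⁻¹ (conjRF f) :=
  RatFunc.algEquivOfTranscendental_apply _ transcendental_X_inv (conjRF f)

lemma conjRF_algebraMap (p : ℂ[X]) :
    conjRF (algebraMap ℂ[X] (RatFunc ℂ) p) =
      algebraMap ℂ[X] (RatFunc ℂ) (p.map (starRingEnd ℂ)) := by
  obtain ⟨h, hconj⟩ : ∃ h, conjRF = RatFunc.mapRingHom (mapRingHom (starRingEnd ℂ)) h := ⟨_, rfl⟩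
  simpa [hconj, RatFunc.coe_mapRingHom_eq_coe_map] using
    RatFunc.map_apply_div (mapRingHom (starRingEnd ℂ)) h p 1

lemma paraConjHom_C (c : ℂ) : paraConjHom (RatFunc.C c) = RatFunc.C (star c) := by
  rw [paraConjHom_apply, ← RatFunc.algebraMap_C, conjRF_algebraMap, map_C, RatFunc.algebraMap_C,
    subst, RatFunc.eval_C, RatFunc.algebraMap_eq_C, starRingEnd_apply]

lemma paraConjHom_X : paraConjHom RatFunc.X = RatFunc.X⁻¹ := by
  rw [paraConjHom_apply, ← RatFunc.algebraMap_X, conjRF_algebraMap, map_X, RatFunc.algebraMap_X,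
    subst, RatFunc.eval_X]

lemma paraConjHom_involutive : Function.Involutive paraConjHom := by
  suffices h : paraConjHom.comp paraConjHom = .id _ from RingHom.congr_fun h
  refine IsLocalization.ringHom_ext (nonZeroDivisors ℂ[X]) (Polynomial.ringHom_ext ?_ ?_)
  · simp [RatFunc.algebraMap_C, paraConjHom_C]
  · simp [RatFunc.algebraMap_X, paraConjHom_X]

/-- Para-conjugation makes `ℂ(z)` a star ring, so that the para-conjugate of a matrix becomes its
conjugate transpose. -/
abbrev paraConjStarRing : StarRing (RatFunc ℂ) where
  star f := subst RatFunc.X⁻¹ (conjRF f)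
  star_involutive f := by simpa only [paraConjHom_apply] using paraConjHom_involutive f
  star_mul f g := by simpa only [paraConjHom_apply, mul_comm] using map_mul paraConjHom f g
  star_add f g := by simpa only [paraConjHom_apply] using map_add paraConjHom f g

attribute [local instance] paraConjStarRing

lemma star_eq_paraConjHom (f : RatFunc ℂ) : star f = paraConjHom f :=
  (paraConjHom_apply f).symm

instance : StarModule ℂ (RatFunc ℂ) where
  star_smul c f := by
    rw [star_eq_paraConjHom, star_eq_paraConjHom, RatFunc.smul_eq_C_mul, RatFunc.smul_eq_C_mul,
      map_mul, paraConjHom_C]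

lemma X_mem_unitary : (RatFunc.X : RatFunc ℂ) ∈ unitary (RatFunc ℂ) := by
  rw [Unitary.mem_iff_star_mul_self, star_eq_paraConjHom, paraConjHom_X,
    inv_mul_cancel₀ RatFunc.X_ne_zero]

lemma C_add_C_mul_X_ne_zero {K : Type*} [CommRing K] [IsDomain K] {a : K} (ha : a ≠ 0) (b : K) :
    RatFunc.C a + RatFunc.C b * RatFunc.X ≠ 0 := by
  rw [← RatFunc.algebraMap_C, ← RatFunc.algebraMap_C, ← RatFunc.algebraMap_X, ← map_mul, ← map_add]
  exact RatFunc.algebraMap_ne_zero fun h => ha (by simpa using congrArg (coeff · 0) h)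

/-- parametrization of para-Hermitian rational matrices. -/
theorem paraHermitian_parametrization (m : ℕ) (α : ℂ) (hα : α ≠ 0)
    (R : Matrix (Fin m) (Fin m) (RatFunc ℂ)) :
    IsParaHermitian R ↔
      ∃ (p : ℕ) (A : Matrix (Fin p) (Fin p) ℂ) (B C : Matrix (Fin p) (Fin m) ℂ)
        (D : Matrix (Fin m) (Fin m) ℂ),
        (zz • toRF A + toRF Aᴴ).det ≠ 0 ∧
        (RatFunc.C α + RatFunc.C (starRingEnd ℂ α) * zz) • R =
          (zz • toRF D + toRF Dᴴ) +
            (zz • toRF Bᴴ + toRF Cᴴ) * (zz • toRF A + toRF Aᴴ)⁻¹ * (zz • toRF C + toRF B) :=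
  paraHermitian_parametrization_general X_mem_unitary RatFunc.adjoin_X
    (C_add_C_mul_X_ne_zero hα (star α)) R
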